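/- Let k ∈ [0,1) and let S be a weakly regular AG-groupoid with a left identity e. Then S is regular if and only if f ∧_k g = f ∘_k g for every (∈,∈∨q_k)-fuzzy right ideal f and every (∈,∈∨q_k)-fuzzy left ideal g of S. -/

import Mathlib

/-- An AG-groupoid: a magma satisfying the left invertive law `(ab)c = (cb)a`. -/
def LeftInvertive (S : Type*) [Mul S] : Prop := ∀ a b c : S, a * b * c = c * b * a

/-- A fuzzy subset: a function into `[0,1]`. -/
def IsFuzzy {S : Type*} (f : S → ℝ) : Prop := ∀ x, 0 ≤ f x ∧ f x ≤ 1

/-- A weakly regular AG-groupoid: each `a` satisfies `a = (ax)(ay)` for some `x, y`. -/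
def WeaklyRegular (S : Type*) [Mul S] : Prop := ∀ a : S, ∃ x y : S, a = a * x * (a * y)

/-- The product of fuzzy subsets: `(f ∘ g)(a)` is the supremum of `min(f b, g c)` over
factorizations `a = b * c` (the empty supremum in `ℝ` is `0`). -/
noncomputable def fuzzyProd {S : Type*} [Mul S] (f g : S → ℝ) (a : S) : ℝ :=
  sSup {v : ℝ | ∃ b c : S, a = b * c ∧ v = min (f b) (g c)}

/-- The constant fuzzy subset `1`. -/
def fuzzyOne (S : Type*) : S → ℝ := fun _ => 1

/-- An `(∈,∈∨q_k)`-fuzzy left ideal of an AG-groupoid. -/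
def FuzzyLeftIdealK {S : Type*} [Mul S] (k : ℝ) (f : S → ℝ) : Prop :=
  ∀ x y : S, min (f y) ((1 - k) / 2) ≤ f (x * y)

/-- An `(∈,∈∨q_k)`-fuzzy right ideal of an AG-groupoid. -/
def FuzzyRightIdealK {S : Type*} [Mul S] (k : ℝ) (f : S → ℝ) : Prop :=
  ∀ x y : S, min (f x) ((1 - k) / 2) ≤ f (x * y)

/-- An `(∈,∈∨q_k)`-fuzzy generalized bi-ideal of an AG-groupoid. -/
def FuzzyGenBiIdealK {S : Type*} [Mul S] (k : ℝ) (f : S → ℝ) : Prop :=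
  ∀ x y z : S, min (min (f x) (f z)) ((1 - k) / 2) ≤ f (x * y * z)

/-- An `(∈,∈∨q_k)`-fuzzy bi-ideal of an AG-groupoid. -/
def FuzzyBiIdealK {S : Type*} [Mul S] (k : ℝ) (f : S → ℝ) : Prop :=
  (∀ x y : S, min (min (f x) (f y)) ((1 - k) / 2) ≤ f (x * y)) ∧
  FuzzyGenBiIdealK k f

/-- An `(∈,∈∨q_k)`-fuzzy quasi-ideal of an AG-groupoid. -/
def FuzzyQuasiIdealK {S : Type*} [Mul S] (k : ℝ) (f : S → ℝ) : Prop :=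
  ∀ x : S,
    min (min (fuzzyProd f (fuzzyOne S) x) (fuzzyProd (fuzzyOne S) f x)) ((1 - k) / 2) ≤ f x

/-- `f_k`. -/
noncomputable def subK {S : Type*} (k : ℝ) (f : S → ℝ) : S → ℝ := fun a => min (f a) ((1 - k) / 2)

/-- `f ∧_k g`. -/
noncomputable def andK {S : Type*} (k : ℝ) (f g : S → ℝ) : S → ℝ :=
  fun a => min (min (f a) (g a)) ((1 - k) / 2)

/-- `f ∘_k g`. -/
noncomputable def prodK {S : Type*} [Mul S] (k : ℝ) (f g : S → ℝ) : S → ℝ :=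
  fun a => min (fuzzyProd f g a) ((1 - k) / 2)

/-- A regular AG-groupoid: each `a` satisfies `a = (ax)a` for some `x`. -/
def RegularAG (S : Type*) [Mul S] : Prop := ∀ a : S, ∃ x : S, a = a * x * a

/-- An intra-regular AG-groupoid: each `a` satisfies `a = (x(aa))y` for some `x, y`. -/
def IntraRegularAG (S : Type*) [Mul S] : Prop :=
  ∀ a : S, ∃ x y : S, a = x * (a * a) * y

/-!
Equality forces regularity because it can be tested on indicator functions, where it says that
`A ∩ B ⊆ AB` for every right ideal `A` and left ideal `B`. Take `A = aS ∪ Sa` and `B = Sa`, which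
contain `a = ea`. From `a ∈ AB` one gets `a = (az)a` or `a = (za)a`, and in the second case
`za = z((za)a) = (za)(za) = (zz)(aa) = a((zz)a)`, so that again `a ∈ (aS)a`.
-/

open scoped Pointwise

section FuzzyProduct

variable {S : Type*} [Mul S] {k : ℝ} {f g : S → ℝ}

theorem min_le_fuzzyProd_mul (hf : IsFuzzy f) (b c : S) :
    min (f b) (g c) ≤ fuzzyProd f g (b * c) := by
  refine le_csSup ⟨1, ?_⟩ ⟨b, c, rfl, rfl⟩
  rintro _ ⟨b', c', -, rfl⟩
  exact (min_le_left _ _).trans (hf b').2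

theorem fuzzyProd_le {a : S} {t : ℝ} (ht : 0 ≤ t)
    (h : ∀ b c : S, a = b * c → min (f b) (g c) ≤ t) : fuzzyProd f g a ≤ t := by
  refine Real.sSup_le ?_ ht
  rintro _ ⟨b, c, hbc, rfl⟩
  exact h b c hbc

theorem exists_mul_eq_of_fuzzyProd_pos {a : S} (h : 0 < fuzzyProd f g a) :
    ∃ b c : S, b * c = a ∧ 0 < f b ∧ 0 < g c := by
  by_contra! hle
  refine h.not_ge (fuzzyProd_le le_rfl fun b c hbc => ?_)
  exact min_le_iff.2 ((le_or_gt (f b) 0).imp_right (hle b c hbc.symm))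

theorem FuzzyRightIdealK.prodK_le (hfr : FuzzyRightIdealK k f) (hf : IsFuzzy f) :
    prodK k f g ≤ f := by
  intro a
  rcases le_or_gt ((1 - k) / 2) (f a) with hK | hK
  · exact min_le_of_right_le hK
  · refine min_le_of_left_le (fuzzyProd_le (hf a).1 fun b c hbc => min_le_of_left_le ?_)
    have hb : min (f b) ((1 - k) / 2) ≤ f a := hbc ▸ hfr b c
    exact (min_le_iff.1 hb).resolve_right hK.not_ge

theorem FuzzyLeftIdealK.prodK_le (hgl : FuzzyLeftIdealK k g) (hg : IsFuzzy g) :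
    prodK k f g ≤ g := by
  intro a
  rcases le_or_gt ((1 - k) / 2) (g a) with hK | hK
  · exact min_le_of_right_le hK
  · refine min_le_of_left_le (fuzzyProd_le (hg a).1 fun b c hbc => min_le_of_right_le ?_)
    have hc : min (g c) ((1 - k) / 2) ≤ g a := hbc ▸ hgl b c
    exact (min_le_iff.1 hc).resolve_right hK.not_ge

theorem prodK_le_andK (hf : IsFuzzy f) (hg : IsFuzzy g)
    (hfr : FuzzyRightIdealK k f) (hgl : FuzzyLeftIdealK k g) : prodK k f g ≤ andK k f g :=
  fun a => le_min (le_min (hfr.prodK_le hf a) (hgl.prodK_le hg a)) (min_le_right _ _)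

theorem RegularAG.andK_le_prodK (hreg : RegularAG S) (hf : IsFuzzy f)
    (hfr : FuzzyRightIdealK k f) : andK k f g ≤ prodK k f g := by
  intro a
  obtain ⟨x, hx⟩ := hreg a
  refine le_min ?_ (min_le_right _ _)
  calc min (min (f a) (g a)) ((1 - k) / 2)
      = min (min (f a) ((1 - k) / 2)) (g a) := min_right_comm _ _ _
    _ ≤ min (f (a * x)) (g a) := min_le_min_right _ (hfr a x)
    _ ≤ fuzzyProd f g (a * x * a) := min_le_fuzzyProd_mul hf _ _
    _ = fuzzyProd f g a := by rw [← hx]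

end FuzzyProduct

section CrispIdeals

variable {S : Type*} [Mul S] {A B : Set S}

/-- Right ideals of a magma as sets of elements; the empty set is allowed. -/
def IsRightIdeal (A : Set S) : Prop := ∀ ⦃x⦄, x ∈ A → ∀ y, x * y ∈ A

/-- Left ideals of a magma as sets of elements; the empty set is allowed. -/
def IsLeftIdeal (B : Set S) : Prop := ∀ x, ∀ ⦃y⦄, y ∈ B → x * y ∈ B

theorem isFuzzy_indicator_one {X : Type*} (A : Set X) : IsFuzzy (A.indicator (1 : X → ℝ)) :=
  fun x => ⟨Set.indicator_nonneg (fun _ _ => zero_le_one) x,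
    Set.indicator_le_self' (fun _ _ => zero_le_one) x⟩

theorem IsRightIdeal.fuzzyRightIdealK_indicator (hA : IsRightIdeal A) (k : ℝ) :
    FuzzyRightIdealK k (A.indicator (1 : S → ℝ)) := by
  intro x y
  refine min_le_of_left_le ?_
  by_cases hx : x ∈ A
  · simp [hx, hA hx y]
  · simpa [hx] using (isFuzzy_indicator_one A (x * y)).1

theorem IsLeftIdeal.fuzzyLeftIdealK_indicator (hB : IsLeftIdeal B) (k : ℝ) :
    FuzzyLeftIdealK k (B.indicator (1 : S → ℝ)) := by
  intro x y
  refine min_le_of_left_le ?_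
  by_cases hy : y ∈ B
  · simp [hy, hB x hy]
  · simpa [hy] using (isFuzzy_indicator_one B (x * y)).1

theorem inter_subset_mul_of_andK_le_prodK {k : ℝ} (hk : k < 1)
    (h : andK k (A.indicator 1) (B.indicator 1) ≤ prodK k (A.indicator 1) (B.indicator 1)) :
    A ∩ B ⊆ A * B := by
  rintro a ⟨haA, haB⟩
  have hand : 0 < andK k (A.indicator 1) (B.indicator 1) a := by
    simpa [andK, haA, haB] using hk
  obtain ⟨b, c, hbc, hb, hc⟩ :=
    exists_mul_eq_of_fuzzyProd_pos (lt_min_iff.1 (hand.trans_le (h a))).1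
  exact ⟨b, Set.mem_of_indicator_ne_zero hb.ne', c, Set.mem_of_indicator_ne_zero hc.ne', hbc⟩

end CrispIdeals

namespace LeftInvertive

variable {S : Type*} [Mul S] {e : S}

protected theorem mul_mul_mul_comm (hS : LeftInvertive S) (a b c d : S) :
    a * b * (c * d) = a * c * (b * d) := by
  rw [hS a b (c * d), hS c d b, hS (b * d) c a]

protected theorem mul_left_comm (hS : LeftInvertive S) (he : ∀ x : S, e * x = x) (a b c : S) :
    a * (b * c) = b * (a * c) := by
  simpa only [he] using hS.mul_mul_mul_comm e a b c

theorem mul_mul_eq_mul_leftId_mul_mul (hS : LeftInvertive S) (he : ∀ x : S, e * x = x)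
    (a b c : S) : a * (b * c) = b * e * a * c :=
  calc a * (b * c) = b * (a * c) := hS.mul_left_comm he a b c
    _ = b * (c * a * e) := by rw [hS c a e, he]
    _ = c * a * (b * e) := hS.mul_left_comm he b (c * a) e
    _ = b * e * a * c := hS c a (b * e)

theorem isLeftIdeal_range_mul_right (hS : LeftInvertive S) (he : ∀ x : S, e * x = x) (a : S) :
    IsLeftIdeal (Set.range (· * a)) := by
  rintro x _ ⟨y, rfl⟩
  exact ⟨y * e * x, (hS.mul_mul_eq_mul_leftId_mul_mul he x y a).symm⟩

theorem isRightIdeal_range_mul_left_union_range_mul_right (hS : LeftInvertive S)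
    (he : ∀ x : S, e * x = x) (a : S) :
    IsRightIdeal (Set.range (a * ·) ∪ Set.range (· * a)) := by
  rintro _ (⟨x, rfl⟩ | ⟨x, rfl⟩) y
  · exact Or.inr ⟨y * x, hS y x a⟩
  · refine Or.inl ⟨y * e * x, ?_⟩
    calc a * (y * e * x) = y * e * (a * x) := hS.mul_left_comm he _ _ _
      _ = y * a * (e * x) := hS.mul_mul_mul_comm _ _ _ _
      _ = y * a * x := by rw [he]
      _ = x * a * y := hS y a x

theorem exists_eq_mul_mul_self_of_eq_mul_self_mul_self (hS : LeftInvertive S)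
    (he : ∀ x : S, e * x = x) {a z : S} (h : a = z * a * a) : ∃ w, a = a * w * a := by
  have hza : z * a = a * (z * z * a) :=
    calc z * a = z * (z * a * a) := by rw [← h]
      _ = z * a * (z * a) := hS.mul_left_comm he _ _ _
      _ = z * z * (a * a) := hS.mul_mul_mul_comm _ _ _ _
      _ = a * (z * z * a) := hS.mul_left_comm he _ _ _
  exact ⟨z * z * a, hza ▸ h⟩

theorem regularAG_of_inter_subset_mul (hS : LeftInvertive S) (he : ∀ x : S, e * x = x)
    (h : ∀ A B : Set S, IsRightIdeal A → IsLeftIdeal B → A ∩ B ⊆ A * B) : RegularAG S := by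
  intro a
  have ha : a ∈ Set.range (· * a) := ⟨e, he a⟩
  obtain ⟨b, hb, _, ⟨y, rfl⟩, hba⟩ := h _ _
    (hS.isRightIdeal_range_mul_left_union_range_mul_right he a)
    (hS.isLeftIdeal_range_mul_right he a) ⟨Or.inr ha, ha⟩
  have hya : a = y * e * b * a := hba.symm.trans (hS.mul_mul_eq_mul_leftId_mul_mul he b y a)
  rcases hb with ⟨x, rfl⟩ | hb
  · exact ⟨y * e * x, by rwa [hS.mul_left_comm he] at hya⟩
  · obtain ⟨z, hz⟩ := hS.isLeftIdeal_range_mul_right he a (y * e) hb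
    exact hS.exists_eq_mul_mul_self_of_eq_mul_self_mul_self he (hz ▸ hya)

end LeftInvertive

theorem regular_iff_andK_eq_prodK_general {S : Type*} [Mul S] (hS : LeftInvertive S)
    (k : ℝ) (hk1 : k < 1) (e : S) (he : ∀ x : S, e * x = x) :
    RegularAG S ↔
      ∀ f g : S → ℝ, IsFuzzy f → IsFuzzy g →
        FuzzyRightIdealK k f → FuzzyLeftIdealK k g → andK k f g = prodK k f g := by
  constructor
  · intro hreg f g hf hg hfr hgl
    exact le_antisymm (hreg.andK_le_prodK hf hfr) (prodK_le_andK hf hg hfr hgl)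
  · intro h
    refine hS.regularAG_of_inter_subset_mul he fun A B hA hB => ?_
    exact inter_subset_mul_of_andK_le_prodK hk1
      (h _ _ (isFuzzy_indicator_one A) (isFuzzy_indicator_one B)
        (hA.fuzzyRightIdealK_indicator k) (hB.fuzzyLeftIdealK_indicator k)).le

/-- a weakly regular AG-groupoid with left identity is regular iff
`f ∧_k g = f ∘_k g` for every `(∈,∈∨q_k)`-fuzzy right ideal `f` and every
`(∈,∈∨q_k)`-fuzzy left ideal `g`. -/
theorem regular_iff_andK_eq_prodK {S : Type*} [Mul S] (hS : LeftInvertive S)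
    (k : ℝ) (hk0 : 0 ≤ k) (hk1 : k < 1)
    (e : S) (he : ∀ x : S, e * x = x) (hwr : WeaklyRegular S) :
    RegularAG S ↔
      ∀ f g : S → ℝ, IsFuzzy f → IsFuzzy g →
        FuzzyRightIdealK k f → FuzzyLeftIdealK k g → andK k f g = prodK k f g := by
  exact regular_iff_andK_eq_prodK_general hS k hk1 e he
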